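/- For each time t = 0,…,T−1 there exists a function f̃_t^1, independent of the strategy pair (g, ψ^2), such that along every realization of positive probability, Π_{t+1}^1 = f̃_t^1(Π_t^1, U_t^1, U_t^2, Z_{t+1}^1). Consequently, for any set P¹ of distributions in Δ(𝒳_{t+1}), P(Π_{t+1}^1 ∈ P¹ | M_t^1, U_t^2) = P(Π_{t+1}^1 ∈ P¹ | Π_t^1, U_t^1, U_t^2). -/

import Mathlib

/-!
Common framework: a two-agent sequential dynamic team with nested information
structure (Dave & Malikopoulos, "Structural results for decentralized
stochastic control with a nested information structure").

* `X t` : state space at time `t`; `U1 t`, `U2 t` : action spaces of agents 1 and 2;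
* `W t` : disturbance; `V1 t`, `V2 t` : measurement noises; `Y1 t`, `Y2 t` : observations.
* Dynamics `X_{t+1} = f t X_t U¹_t U²_t W_t`, observations `Y^k_t = h^k t X_t V^k_t`.
* Memories `M²_t = (Y²_{0:t}, U²_{0:t-1})`, `L_t^{[1,2]} = (Y¹_{0:t}, U¹_{0:t-1})`,
  `M¹_t = (L_t^{[1,2]}, M²_t)` (nested information).
* The primitive random variables are independent with given PMFs; the sample
  space for horizon `T` is `ΩT`, with the product mass function `mass`.
-/

open scoped Classical
open Finset

namespace NestedTeam

noncomputable section

/-- Memory of agent 2 at time `t`: observations `Y²₀,…,Y²ₜ` and actions `U²₀,…,U²ₜ₋₁`. -/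
abbrev M2 (Y2 U2 : ℕ → Type) (t : ℕ) : Type :=
  ((s : Fin (t + 1)) → Y2 s) × ((s : Fin t) → U2 s)

/-- The private information `L_t^{[1,2]} = M¹_t \ M²_t` of agent 1. -/
abbrev Lp (Y1 U1 : ℕ → Type) (t : ℕ) : Type :=
  ((s : Fin (t + 1)) → Y1 s) × ((s : Fin t) → U1 s)

/-- Memory of agent 1 at time `t` (nested information: it contains `M²_t`). -/
abbrev M1 (Y1 Y2 U1 U2 : ℕ → Type) (t : ℕ) : Type :=
  Lp Y1 U1 t × M2 Y2 U2 t

/-- The system: dynamics, observation maps and per-stage cost. -/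
structure Sys (X U1 U2 W V1 V2 Y1 Y2 : ℕ → Type) where
  f : ∀ t, X t → U1 t → U2 t → W t → X (t + 1)
  h1 : ∀ t, X t → V1 t → Y1 t
  h2 : ∀ t, X t → V2 t → Y2 t
  c : ∀ t, X t → U1 t → U2 t → ℝ

/-- A control strategy profile: `U¹_t = g1 t M¹_t`, `U²_t = g2 t M²_t`. -/
structure Strat (U1 U2 Y1 Y2 : ℕ → Type) where
  g1 : ∀ t, M1 Y1 Y2 U1 U2 t → U1 t
  g2 : ∀ t, M2 Y2 U2 t → U2 t

/-- A realization of the primitive random variables. -/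
structure Prim (X W V1 V2 : ℕ → Type) where
  x0 : X 0
  w : ∀ t, W t
  v1 : ∀ t, V1 t
  v2 : ∀ t, V2 t

variable {X U1 U2 W V1 V2 Y1 Y2 : ℕ → Type}

/-- The closed-loop trajectory: states `X_{0:t}` and actions `U^{1:2}_{0:t-1}`. -/
def hist (S : Sys X U1 U2 W V1 V2 Y1 Y2) (g : Strat U1 U2 Y1 Y2) (ρ : Prim X W V1 V2) :
    (t : ℕ) → ((s : Fin (t + 1)) → X s) × ((s : Fin t) → U1 s × U2 s)
  | 0 => (Fin.cons (α := fun s : Fin 1 => X s) ρ.x0 (fun i => i.elim0), fun i => i.elim0)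
  | t + 1 =>
    let p := hist S g ρ t
    let y1 : (s : Fin (t + 1)) → Y1 s := fun s => S.h1 s (p.1 s) (ρ.v1 s)
    let y2 : (s : Fin (t + 1)) → Y2 s := fun s => S.h2 s (p.1 s) (ρ.v2 s)
    let m1 : M1 Y1 Y2 U1 U2 t := ((y1, fun s => (p.2 s).1), (y2, fun s => (p.2 s).2))
    let a1 := g.g1 t m1
    let a2 := g.g2 t m1.2
    (Fin.snoc (α := fun s : Fin (t + 2) => X s) p.1 (S.f t (p.1 (Fin.last t)) a1 a2 (ρ.w t)),
     Fin.snoc (α := fun s : Fin (t + 1) => U1 s × U2 s) p.2 (a1, a2))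

/-- State `X_t` along the closed loop. -/
def xTraj (S : Sys X U1 U2 W V1 V2 Y1 Y2) (g : Strat U1 U2 Y1 Y2) (ρ : Prim X W V1 V2)
    (t : ℕ) : X t := (hist S g ρ t).1 (Fin.last t)

/-- `L_t^{[1,2]} = (Y¹_{0:t}, U¹_{0:t-1})` along the closed loop. -/
def lpTraj (S : Sys X U1 U2 W V1 V2 Y1 Y2) (g : Strat U1 U2 Y1 Y2) (ρ : Prim X W V1 V2)
    (t : ℕ) : Lp Y1 U1 t :=
  (fun s => S.h1 s ((hist S g ρ t).1 s) (ρ.v1 s), fun s => ((hist S g ρ t).2 s).1)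

/-- `M²_t = (Y²_{0:t}, U²_{0:t-1})` along the closed loop. -/
def m2Traj (S : Sys X U1 U2 W V1 V2 Y1 Y2) (g : Strat U1 U2 Y1 Y2) (ρ : Prim X W V1 V2)
    (t : ℕ) : M2 Y2 U2 t :=
  (fun s => S.h2 s ((hist S g ρ t).1 s) (ρ.v2 s), fun s => ((hist S g ρ t).2 s).2)

/-- `M¹_t` along the closed loop. -/
def m1Traj (S : Sys X U1 U2 W V1 V2 Y1 Y2) (g : Strat U1 U2 Y1 Y2) (ρ : Prim X W V1 V2)
    (t : ℕ) : M1 Y1 Y2 U1 U2 t := (lpTraj S g ρ t, m2Traj S g ρ t)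

/-- Action `U¹_t` along the closed loop. -/
def u1Traj (S : Sys X U1 U2 W V1 V2 Y1 Y2) (g : Strat U1 U2 Y1 Y2) (ρ : Prim X W V1 V2)
    (t : ℕ) : U1 t := g.g1 t (m1Traj S g ρ t)

/-- Action `U²_t` along the closed loop. -/
def u2Traj (S : Sys X U1 U2 W V1 V2 Y1 Y2) (g : Strat U1 U2 Y1 Y2) (ρ : Prim X W V1 V2)
    (t : ℕ) : U2 t := g.g2 t (m2Traj S g ρ t)

/-- Observation `Y¹_t` along the closed loop. -/
def y1Traj (S : Sys X U1 U2 W V1 V2 Y1 Y2) (g : Strat U1 U2 Y1 Y2) (ρ : Prim X W V1 V2)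
    (t : ℕ) : Y1 t := S.h1 t (xTraj S g ρ t) (ρ.v1 t)

/-- Observation `Y²_t` along the closed loop. -/
def y2Traj (S : Sys X U1 U2 W V1 V2 Y1 Y2) (g : Strat U1 U2 Y1 Y2) (ρ : Prim X W V1 V2)
    (t : ℕ) : Y2 t := S.h2 t (xTraj S g ρ t) (ρ.v2 t)

/-- New information `Z¹_{t+1} = (Y¹_{t+1}, U¹_t, Y²_{t+1}, U²_t)` of agent 1. -/
def z1Traj (S : Sys X U1 U2 W V1 V2 Y1 Y2) (g : Strat U1 U2 Y1 Y2) (ρ : Prim X W V1 V2)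
    (t : ℕ) : Y1 (t + 1) × U1 t × Y2 (t + 1) × U2 t :=
  (y1Traj S g ρ (t + 1), u1Traj S g ρ t, y2Traj S g ρ (t + 1), u2Traj S g ρ t)

/-- New information `Z²_{t+1} = (Y²_{t+1}, U²_t)` of agent 2. -/
def z2Traj (S : Sys X U1 U2 W V1 V2 Y1 Y2) (g : Strat U1 U2 Y1 Y2) (ρ : Prim X W V1 V2)
    (t : ℕ) : Y2 (t + 1) × U2 t := (y2Traj S g ρ (t + 1), u2Traj S g ρ t)

/-- Sample space of primitive random variables for horizon `T`. -/
abbrev ΩT (X W V1 V2 : ℕ → Type) (T : ℕ) : Type :=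
  X 0 × ((t : Fin (T + 1)) → W t) × ((t : Fin (T + 1)) → V1 t) × ((t : Fin (T + 1)) → V2 t)

/-- Extend a finite-horizon family to all times (by junk beyond the horizon). -/
def ext {α : ℕ → Type} [∀ t, Inhabited (α t)] (T : ℕ) (a : (t : Fin (T + 1)) → α t)
    (t : ℕ) : α t := if h : t < T + 1 then a ⟨t, h⟩ else default

/-- The primitive realization corresponding to a sample point. -/
def toPrim [∀ t, Inhabited (W t)] [∀ t, Inhabited (V1 t)] [∀ t, Inhabited (V2 t)]
    (T : ℕ) (ω : ΩT X W V1 V2 T) : Prim X W V1 V2 :=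
  ⟨ω.1, ext T ω.2.1, ext T ω.2.2.1, ext T ω.2.2.2⟩

/-- The (known) probability mass functions of the mutually independent primitive
random variables. -/
structure PrimPMF (X W V1 V2 : ℕ → Type) [Fintype (X 0)] [∀ t, Fintype (W t)]
    [∀ t, Fintype (V1 t)] [∀ t, Fintype (V2 t)] where
  pX0 : X 0 → ℝ
  pW : ∀ t, W t → ℝ
  pV1 : ∀ t, V1 t → ℝ
  pV2 : ∀ t, V2 t → ℝ
  pX0_nonneg : ∀ x, 0 ≤ pX0 x
  pX0_sum : ∑ x, pX0 x = 1
  pW_nonneg : ∀ t w, 0 ≤ pW t w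
  pW_sum : ∀ t, ∑ w, pW t w = 1
  pV1_nonneg : ∀ t v, 0 ≤ pV1 t v
  pV1_sum : ∀ t, ∑ v, pV1 t v = 1
  pV2_nonneg : ∀ t v, 0 ≤ pV2 t v
  pV2_sum : ∀ t, ∑ v, pV2 t v = 1

variable [Fintype (X 0)] [∀ t, Fintype (W t)] [∀ t, Fintype (V1 t)] [∀ t, Fintype (V2 t)]
variable [∀ t, Inhabited (W t)] [∀ t, Inhabited (V1 t)] [∀ t, Inhabited (V2 t)]

/-- Product mass of a sample point (independent primitives). -/
def mass (P : PrimPMF X W V1 V2) (T : ℕ) (ω : ΩT X W V1 V2 T) : ℝ :=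
  P.pX0 ω.1 * (∏ t : Fin (T + 1), P.pW t (ω.2.1 t)) *
    (∏ t : Fin (T + 1), P.pV1 t (ω.2.2.1 t)) * (∏ t : Fin (T + 1), P.pV2 t (ω.2.2.2 t))

/-- Elementary conditional probability `P(A | B)` on a finite sample space. -/
def condProb {Ω : Type*} [Fintype Ω] (P : Ω → ℝ) (A B : Ω → Prop) : ℝ :=
  (∑ ω, if A ω ∧ B ω then P ω else 0) / (∑ ω, if B ω then P ω else 0)

/-- Elementary conditional expectation `E[F | B]` on a finite sample space. -/
def condExp {Ω : Type*} [Fintype Ω] (P : Ω → ℝ) (F : Ω → ℝ) (B : Ω → Prop) : ℝ :=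
  (∑ ω, if B ω then P ω * F ω else 0) / (∑ ω, if B ω then P ω else 0)

/-- Agent 1's information state `Π¹_t = P(X_t = · | M¹_t)` at the realization `ω`. -/
def infoState1 (S : Sys X U1 U2 W V1 V2 Y1 Y2) (g : Strat U1 U2 Y1 Y2)
    (P : PrimPMF X W V1 V2) (T : ℕ) (ω : ΩT X W V1 V2 T) (t : ℕ) : X t → ℝ :=
  fun x => condProb (mass P T)
    (fun ω' => xTraj S g (toPrim T ω') t = x)
    (fun ω' => m1Traj S g (toPrim T ω') t = m1Traj S g (toPrim T ω) t)

/-- Agent 2's information state `Π²_t = P((X_t, L_t^{[1,2]}) = · | M²_t)` at `ω`. -/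
def infoState2 (S : Sys X U1 U2 W V1 V2 Y1 Y2) (g : Strat U1 U2 Y1 Y2)
    (P : PrimPMF X W V1 V2) (T : ℕ) (ω : ΩT X W V1 V2 T) (t : ℕ) :
    X t × Lp Y1 U1 t → ℝ :=
  fun sl => condProb (mass P T)
    (fun ω' => (xTraj S g (toPrim T ω') t, lpTraj S g (toPrim T ω') t) = sl)
    (fun ω' => m2Traj S g (toPrim T ω') t = m2Traj S g (toPrim T ω) t)

/-- Per-stage cost along the closed loop. -/
def stageCost (S : Sys X U1 U2 W V1 V2 Y1 Y2) (g : Strat U1 U2 Y1 Y2) (ρ : Prim X W V1 V2)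
    (t : ℕ) : ℝ := S.c t (xTraj S g ρ t) (u1Traj S g ρ t) (u2Traj S g ρ t)

/-- Expected cost-to-go `𝒥_{t₀}(g) = E[Σ_{t=t₀}^T c_t(X_t,U¹_t,U²_t)]`. -/
def costToGo (S : Sys X U1 U2 W V1 V2 Y1 Y2) (g : Strat U1 U2 Y1 Y2)
    (P : PrimPMF X W V1 V2) (T t0 : ℕ) : ℝ :=
  ∑ ω : ΩT X W V1 V2 T, mass P T ω * ∑ t ∈ Finset.Icc t0 T, stageCost S g (toPrim T ω) t

/-- Expected total cost `𝒥(g) = E[Σ_{t=0}^T c_t(X_t,U¹_t,U²_t)]`. -/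
def totalCost (S : Sys X U1 U2 W V1 V2 Y1 Y2) (g : Strat U1 U2 Y1 Y2)
    (P : PrimPMF X W V1 V2) (T : ℕ) : ℝ := costToGo S g P T 0

/-- `(g, ψ²)` is a compatible control/prescription pair: agent 1's action is
generated by the prescription `Γ_t^{[2,1]} = ψ_t(M²_t)` applied to `Π¹_t`. -/
def Compat (S : Sys X U1 U2 W V1 V2 Y1 Y2) (g : Strat U1 U2 Y1 Y2)
    (ψ : ∀ t, M2 Y2 U2 t → (X t → ℝ) → U1 t) (P : PrimPMF X W V1 V2) (T : ℕ) : Prop :=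
  ∀ t, t ≤ T → ∀ ω : ΩT X W V1 V2 T, 0 < mass P T ω →
    u1Traj S g (toPrim T ω) t =
      ψ t (m2Traj S g (toPrim T ω) t) (infoState1 S g P T ω t)

/-- The map `e_t` of Lemma 4: conditioning a joint distribution on
`𝒳_t × 𝓛_t^{[1,2]}` on its second component. -/
def eMap [∀ t, Fintype (X t)] (t : ℕ) (π2 : X t × Lp Y1 U1 t → ℝ) (l : Lp Y1 U1 t) :
    X t → ℝ := fun x => π2 (x, l) / ∑ x', π2 (x', l)

/-!
The observations `(Y¹_{t+1}, Y²_{t+1})` and the state `X_{t+1}` are a function of `X_t`, the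
actions at time `t` and the noises `(W_t, V¹_{t+1}, V²_{t+1})`, while `X_t` and `M¹_t` do not
involve these noises. Replacing the noises by an independent copy therefore leaves every
expectation given `M¹_t` unchanged, so the conditional law of `(X_{t+1}, Y¹_{t+1}, Y²_{t+1})`
given `M¹_t` is the mixture of the transition laws with weights `Π¹_t`. Bayes' rule turns this
mixture into the filter. The same formula shows that `P(Π¹_{t+1} ∈ P¹ | M¹_t)` depends on `M¹_t`
only through `(Π¹_t, U¹_t, U²_t)`, and a conditional probability that is constant on the cells of
a partition keeps its value on unions of cells.
-/

section FiniteProbability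

variable {Ω : Type*} [Fintype Ω] {P : Ω → ℝ} {A A' B C : Ω → Prop}

/-- The probability of an event for a mass function on a finite sample space. -/
def prob (P : Ω → ℝ) (B : Ω → Prop) : ℝ := ∑ ω, if B ω then P ω else 0

theorem condProb_eq_prob_div_prob (P : Ω → ℝ) (A B : Ω → Prop) :
    condProb P A B = prob P (fun ω => A ω ∧ B ω) / prob P B := by
  unfold condProb prob
  congr!

theorem prob_pos (hP : ∀ ω, 0 ≤ P ω) {ω : Ω} (hB : B ω) (hω : 0 < P ω) : 0 < prob P B :=
  sum_pos' (fun ω' _ => by split_ifs <;> simp [hP ω']) ⟨ω, mem_univ ω, by rwa [if_pos hB]⟩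

theorem prob_eq_zero (h : ∀ ω, B ω → P ω = 0) : prob P B = 0 :=
  sum_eq_zero fun ω _ => ite_eq_right_iff.2 (h ω)

theorem prob_congr (h : ∀ ω, P ω ≠ 0 → (A ω ↔ B ω)) : prob P A = prob P B :=
  sum_congr rfl fun ω _ => by
    by_cases hω : P ω = 0
    · simp [hω]
    · simp [h ω hω]

theorem condProb_congr_left (h : ∀ ω, P ω ≠ 0 → B ω → (A ω ↔ A' ω)) :
    condProb P A B = condProb P A' B := by
  rw [condProb_eq_prob_div_prob, condProb_eq_prob_div_prob,
    prob_congr fun ω hω => and_congr_left (h ω hω)]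

theorem condProb_congr_right (h : ∀ ω, B ω ↔ C ω) : condProb P A B = condProb P A C := by
  simp only [condProb, h]

theorem condExp_congr_left {F G : Ω → ℝ} (h : ∀ ω, B ω → F ω = G ω) :
    condExp P F B = condExp P G B := by
  unfold condExp
  congr 1
  exact sum_congr rfl fun ω _ => ite_congr rfl (fun hω => by rw [h ω hω]) fun _ => rfl

theorem condProb_and_right (hB : prob P B ≠ 0) :
    condProb P A (fun ω => B ω ∧ C ω) =
      condProb P (fun ω => A ω ∧ C ω) B / condProb P C B := by
  simp only [condProb_eq_prob_div_prob, div_div_div_cancel_right₀ hB, and_comm (b := B _),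
    and_left_comm (b := B _)]

theorem prob_eq_sum_fiber {α : Type*} (M : Ω → α) :
    prob P A = ∑ m ∈ univ.image M, prob P (fun ω => A ω ∧ M ω = m) := by
  unfold prob
  rw [sum_comm]
  refine sum_congr rfl fun ω _ => ?_
  by_cases hA : A ω <;> simp [hA]

theorem condProb_eq_of_forall_fiber {α : Type*} {M : Ω → α} {r : ℝ} (hP : ∀ ω, 0 ≤ P ω)
    (hBM : ∀ ω ω', M ω = M ω' → B ω' → B ω) (hB : prob P B ≠ 0)
    (hr : ∀ ω, B ω → 0 < P ω → condProb P A (fun ω' => M ω' = M ω) = r) :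
    condProb P A B = r := by
  rw [condProb_eq_prob_div_prob, div_eq_iff hB, prob_eq_sum_fiber M, prob_eq_sum_fiber M, mul_sum]
  refine sum_congr rfl fun m _ => ?_
  by_cases hm : ∃ ω, M ω = m ∧ B ω ∧ 0 < P ω
  · obtain ⟨ω, rfl, hBω, hω⟩ := hm
    have fiber_subset : ∀ ω', B ω' ∧ M ω' = M ω ↔ M ω' = M ω :=
      fun ω' => and_iff_right_of_imp fun h => hBM ω' ω h hBω
    simp only [and_assoc, fiber_subset]
    have fiber_pos : 0 < prob P fun ω' => M ω' = M ω := prob_pos hP rfl hω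
    exact (div_eq_iff fiber_pos.ne').1 (condProb_eq_prob_div_prob P A _ ▸ hr ω hBω hω)
  · have null : ∀ ω, M ω = m → B ω → P ω = 0 := fun ω hM hBω =>
      ((hP ω).eq_or_lt.resolve_right fun hω => hm ⟨ω, hM, hBω, hω⟩).symm
    rw [prob_eq_zero fun ω h => null ω h.2 h.1.2, prob_eq_zero fun ω h => null ω h.2 h.1, mul_zero]

theorem condExp_comp_eq_finsum {α : Type*} (P : Ω → ℝ) (Y : Ω → α) (φ : α → ℝ) (B : Ω → Prop) :
    condExp P (fun ω => φ (Y ω)) B = ∑ᶠ x, condProb P (fun ω => Y ω = x) B * φ x := by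
  have support_subset : (Function.support fun x => condProb P (fun ω => Y ω = x) B * φ x) ⊆
      univ.image Y := fun x hx => by
    contrapose! hx
    have hY : ∀ ω, Y ω ≠ x := by simpa using hx
    simp [condProb, hY]
  rw [finsum_eq_sum_of_support_subset _ support_subset]
  simp only [condExp, condProb, div_mul_eq_mul_div, ← sum_div, sum_mul]
  rw [sum_comm]
  congr 1
  exact sum_congr rfl fun ω _ => by simp [ite_and]

/-- `c` is a coordinate of the sample space that has law `q` and is independent of the remaining
coordinates, and `r ω b` is the sample point `ω` with this coordinate replaced by `b`. Independence
is encoded by `mass_mul`: exchanging the coordinate with an independent copy preserves the mass. -/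
structure IsResampling {β : Type*} [Fintype β] (P : Ω → ℝ) (q : β → ℝ) (c : Ω → β)
    (r : Ω → β → Ω) : Prop where
  sum_eq_one : ∑ b, q b = 1
  coord_resample : ∀ ω b, c (r ω b) = b
  resample_resample : ∀ ω b, r (r ω b) (c ω) = ω
  mass_mul : ∀ ω b, P (r ω b) * q (c ω) = P ω * q b

namespace IsResampling

variable {β : Type*} [Fintype β] {q : β → ℝ} {c : Ω → β} {r : Ω → β → Ω}

theorem sum_mul_eq (h : IsResampling P q c r) (F : Ω → ℝ) :
    ∑ ω, P ω * F ω = ∑ ω, P ω * ∑ b, q b * F (r ω b) := by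
  let swap : Ω × β → Ω × β := fun p => (r p.1 p.2, c p.1)
  have swap_swap : Function.Involutive swap := fun p =>
    Prod.ext (h.resample_resample p.1 p.2) (h.coord_resample p.1 p.2)
  calc ∑ ω, P ω * F ω = ∑ p : Ω × β, P p.1 * q p.2 * F p.1 := by
        simp only [Fintype.sum_prod_type, mul_right_comm _ (q _), ← mul_sum, h.sum_eq_one, mul_one]
    _ = ∑ p : Ω × β, P (r p.1 p.2) * q (c p.1) * F (r p.1 p.2) :=
        (Equiv.sum_comp swap_swap.toPerm fun p => P p.1 * q p.2 * F p.1).symm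
    _ = ∑ ω, P ω * ∑ b, q b * F (r ω b) := by
        simp only [h.mass_mul, Fintype.sum_prod_type, mul_sum, mul_assoc]

theorem condProb_eq_condExp (h : IsResampling P q c r) (hB : ∀ ω b, B (r ω b) ↔ B ω) :
    condProb P A B = condExp P (fun ω => prob q fun b => A (r ω b)) B := by
  unfold condProb condExp
  congr 1
  calc ∑ ω, (if A ω ∧ B ω then P ω else 0) = ∑ ω, P ω * if A ω ∧ B ω then 1 else 0 := by simp
    _ = ∑ ω, P ω * ∑ b, q b * if A (r ω b) ∧ B (r ω b) then 1 else 0 := h.sum_mul_eq _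
    _ = ∑ ω, if B ω then P ω * prob q (fun b => A (r ω b)) else 0 :=
        sum_congr rfl fun ω _ => by by_cases hω : B ω <;> simp [hB, hω, prob]

end IsResampling

end FiniteProbability

theorem prod_update_mul {ι R : Type*} [Fintype ι] [DecidableEq ι] [CommMonoid R] {α : ι → Type*}
    (p : ∀ i, α i → R) (a : ∀ i, α i) (i : ι) (b : α i) :
    (∏ j, p j (Function.update a i b j)) * p i (a i) = (∏ j, p j (a j)) * p i b := by
  rw [← mul_prod_erase univ _ (mem_univ i), ← mul_prod_erase univ (fun j => p j (a j)) (mem_univ i),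
    prod_congr rfl fun j hj => by rw [Function.update_of_ne (ne_of_mem_erase hj)],
    Function.update_self, mul_right_comm, mul_comm (p i b), mul_right_comm]

theorem ext_update {α : ℕ → Type} [∀ t, Inhabited (α t)] (T : ℕ) (a : (t : Fin (T + 1)) → α t)
    (i : Fin (T + 1)) (b : α i) :
    ext T (Function.update a i b) = Function.update (ext T a) (i : ℕ) b := by
  funext s
  rcases eq_or_ne s i with rfl | hs
  · simp [ext, i.is_lt]
  · simp [ext, Function.update, Fin.ext_iff, hs]

section Trajectories

omit [Fintype (X 0)] [∀ t, Fintype (W t)] [∀ t, Fintype (V1 t)] [∀ t, Fintype (V2 t)]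
  [∀ t, Inhabited (W t)] [∀ t, Inhabited (V1 t)] [∀ t, Inhabited (V2 t)]

variable (S : Sys X U1 U2 W V1 V2 Y1 Y2) (g : Strat U1 U2 Y1 Y2) {ρ ρ' : Prim X W V1 V2} {t : ℕ}

/-- The noises `(W_t, V¹_{t+1}, V²_{t+1})` entering the system between times `t` and `t + 1`. -/
abbrev StepNoise (W V1 V2 : ℕ → Type) (t : ℕ) : Type :=
  W t × V1 (t + 1) × V2 (t + 1)

/-- The triple `(X_{t+1}, Y¹_{t+1}, Y²_{t+1})` as a function of state, actions and noises. -/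
def step (t : ℕ) (x : X t) (u1 : U1 t) (u2 : U2 t) (n : StepNoise W V1 V2 t) :
    X (t + 1) × Y1 (t + 1) × Y2 (t + 1) :=
  let x' := S.f t x u1 u2 n.1
  (x', S.h1 (t + 1) x' n.2.1, S.h2 (t + 1) x' n.2.2)

/-- The triple `(X_t, Y¹_t, Y²_t)` along the closed loop. -/
def stateObs (ρ : Prim X W V1 V2) (t : ℕ) : X t × Y1 t × Y2 t :=
  (xTraj S g ρ t, y1Traj S g ρ t, y2Traj S g ρ t)

theorem hist_congr (h0 : ρ.x0 = ρ'.x0) (hw : ∀ s < t, ρ.w s = ρ'.w s)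
    (hv1 : ∀ s < t, ρ.v1 s = ρ'.v1 s) (hv2 : ∀ s < t, ρ.v2 s = ρ'.v2 s) :
    hist S g ρ t = hist S g ρ' t := by
  induction t with
  | zero => simp [hist, h0]
  | succ t ih =>
    have ih := ih (fun s hs => hw s (by lia)) (fun s hs => hv1 s (by lia))
      (fun s hs => hv2 s (by lia))
    have hv1 : ∀ s : Fin (t + 1), ρ.v1 s = ρ'.v1 s := fun s => hv1 s s.2
    have hv2 : ∀ s : Fin (t + 1), ρ.v2 s = ρ'.v2 s := fun s => hv2 s s.2
    simp only [hist, ih, hv1, hv2, hw t t.lt_succ_self]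

theorem xTraj_congr (h : hist S g ρ t = hist S g ρ' t) : xTraj S g ρ t = xTraj S g ρ' t := by
  rw [xTraj, xTraj, h]

theorem m1Traj_congr (h : hist S g ρ t = hist S g ρ' t) (hv1 : ∀ s ≤ t, ρ.v1 s = ρ'.v1 s)
    (hv2 : ∀ s ≤ t, ρ.v2 s = ρ'.v2 s) : m1Traj S g ρ t = m1Traj S g ρ' t := by
  have hv1 : ∀ s : Fin (t + 1), ρ.v1 s = ρ'.v1 s := fun s => hv1 s s.is_le
  have hv2 : ∀ s : Fin (t + 1), ρ.v2 s = ρ'.v2 s := fun s => hv2 s s.is_le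
  simp only [m1Traj, lpTraj, m2Traj, h, hv1, hv2]

theorem u1Traj_congr (h : m1Traj S g ρ t = m1Traj S g ρ' t) :
    u1Traj S g ρ t = u1Traj S g ρ' t := congrArg (g.g1 t) h

theorem u2Traj_congr (h : m1Traj S g ρ t = m1Traj S g ρ' t) :
    u2Traj S g ρ t = u2Traj S g ρ' t :=
  congrArg (fun m : M1 Y1 Y2 U1 U2 t => g.g2 t m.2) h

theorem stateObs_succ (ρ : Prim X W V1 V2) (t : ℕ) :
    stateObs S g ρ (t + 1) = step S t (xTraj S g ρ t) (u1Traj S g ρ t) (u2Traj S g ρ t)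
      (ρ.w t, ρ.v1 (t + 1), ρ.v2 (t + 1)) := by
  have x_succ : xTraj S g ρ (t + 1) =
      S.f t (xTraj S g ρ t) (u1Traj S g ρ t) (u2Traj S g ρ t) (ρ.w t) :=
    Fin.snoc_last (α := fun s : Fin (t + 2) => X s) _ _
  simp only [stateObs, step, y1Traj, y2Traj, x_succ]

theorem lpTraj_succ (ρ : Prim X W V1 V2) (t : ℕ) :
    lpTraj S g ρ (t + 1) =
      (Fin.snoc (α := fun s : Fin (t + 2) => Y1 s) (lpTraj S g ρ t).1 (y1Traj S g ρ (t + 1)),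
        Fin.snoc (α := fun s : Fin (t + 1) => U1 s) (lpTraj S g ρ t).2 (u1Traj S g ρ t)) := by
  refine Prod.ext ?_ ?_ <;> funext s <;> refine Fin.lastCases ?_ (fun s => ?_) s
  all_goals simp [lpTraj, y1Traj, xTraj, u1Traj, m1Traj, m2Traj, hist]

theorem m2Traj_succ (ρ : Prim X W V1 V2) (t : ℕ) :
    m2Traj S g ρ (t + 1) =
      (Fin.snoc (α := fun s : Fin (t + 2) => Y2 s) (m2Traj S g ρ t).1 (y2Traj S g ρ (t + 1)),
        Fin.snoc (α := fun s : Fin (t + 1) => U2 s) (m2Traj S g ρ t).2 (u2Traj S g ρ t)) := by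
  refine Prod.ext ?_ ?_ <;> funext s <;> refine Fin.lastCases ?_ (fun s => ?_) s
  all_goals simp [y2Traj, xTraj, u2Traj, m2Traj, hist]

theorem m1Traj_succ_eq_iff :
    m1Traj S g ρ (t + 1) = m1Traj S g ρ' (t + 1) ↔
      m1Traj S g ρ t = m1Traj S g ρ' t ∧
        (stateObs S g ρ (t + 1)).2 = (stateObs S g ρ' (t + 1)).2 := by
  have actions : m1Traj S g ρ t = m1Traj S g ρ' t →
      u1Traj S g ρ t = u1Traj S g ρ' t ∧ u2Traj S g ρ t = u2Traj S g ρ' t :=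
    fun h => ⟨u1Traj_congr S g h, u2Traj_congr S g h⟩
  simp only [m1Traj, Prod.ext_iff, lpTraj_succ, m2Traj_succ, Fin.snoc_inj, stateObs] at actions ⊢
  tauto

end Trajectories

section Filter

variable (S : Sys X U1 U2 W V1 V2 Y1 Y2) (g : Strat U1 U2 Y1 Y2) (P : PrimPMF X W V1 V2)
  {T t : ℕ}

omit [∀ t, Inhabited (W t)] [∀ t, Inhabited (V1 t)] [∀ t, Inhabited (V2 t)] in
theorem mass_nonneg (ω : ΩT X W V1 V2 T) : 0 ≤ mass P T ω :=
  mul_nonneg (mul_nonneg (mul_nonneg (P.pX0_nonneg _) (prod_nonneg fun _ _ => P.pW_nonneg _ _))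
    (prod_nonneg fun _ _ => P.pV1_nonneg _ _)) (prod_nonneg fun _ _ => P.pV2_nonneg _ _)

/-- The joint mass function of the noises `(W_t, V¹_{t+1}, V²_{t+1})`. -/
def stepMass (t : ℕ) (n : StepNoise W V1 V2 t) : ℝ :=
  P.pW t n.1 * (P.pV1 (t + 1) n.2.1 * P.pV2 (t + 1) n.2.2)

/-- The noises `(W_t, V¹_{t+1}, V²_{t+1})` at a sample point. -/
def stepNoise (ht : t < T) (ω : ΩT X W V1 V2 T) : StepNoise W V1 V2 t :=
  (ω.2.1 ⟨t, by lia⟩, ω.2.2.1 ⟨t + 1, by lia⟩, ω.2.2.2 ⟨t + 1, by lia⟩)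

/-- The sample point `ω` with its noises `(W_t, V¹_{t+1}, V²_{t+1})` replaced by `n`. -/
def resample (ht : t < T) (ω : ΩT X W V1 V2 T) (n : StepNoise W V1 V2 t) : ΩT X W V1 V2 T :=
  (ω.1, Function.update ω.2.1 ⟨t, by lia⟩ n.1, Function.update ω.2.2.1 ⟨t + 1, by lia⟩ n.2.1,
    Function.update ω.2.2.2 ⟨t + 1, by lia⟩ n.2.2)

omit [∀ t, Inhabited (W t)] [∀ t, Inhabited (V1 t)] [∀ t, Inhabited (V2 t)] in
theorem isResampling_mass (ht : t < T) :
    IsResampling (mass P T) (stepMass P t) (stepNoise ht) (resample ht) where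
  sum_eq_one := by
    simp only [stepMass, Fintype.sum_prod_type, ← mul_sum, P.pV2_sum, P.pV1_sum, P.pW_sum, mul_one]
  coord_resample ω n := by simp [stepNoise, resample]
  resample_resample ω n := by simp [stepNoise, resample]
  mass_mul ω n := by
    have hw := prod_update_mul (fun s : Fin (T + 1) => P.pW s) ω.2.1 ⟨t, by lia⟩ n.1
    have hv1 := prod_update_mul (fun s : Fin (T + 1) => P.pV1 s) ω.2.2.1 ⟨t + 1, by lia⟩ n.2.1
    have hv2 := prod_update_mul (fun s : Fin (T + 1) => P.pV2 s) ω.2.2.2 ⟨t + 1, by lia⟩ n.2.2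
    have regroup : ∀ x A B C a b c : ℝ,
        x * A * B * C * (a * (b * c)) = x * (A * a) * (B * b) * (C * c) := fun _ _ _ _ _ _ _ => by
      ring
    dsimp only at hw hv1 hv2
    simp only [mass, stepMass, stepNoise, resample, regroup, hw, hv1, hv2]

omit [Fintype (X 0)] [∀ t, Fintype (W t)] [∀ t, Fintype (V1 t)] [∀ t, Fintype (V2 t)] in
theorem toPrim_resample (ht : t < T) (ω : ΩT X W V1 V2 T) (n : StepNoise W V1 V2 t) :
    toPrim T (resample ht ω n) =
      ⟨ω.1, Function.update (toPrim T ω).w t n.1, Function.update (toPrim T ω).v1 (t + 1) n.2.1,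
        Function.update (toPrim T ω).v2 (t + 1) n.2.2⟩ := by
  simp only [toPrim, resample, ext_update]

omit [Fintype (X 0)] [∀ t, Fintype (W t)] [∀ t, Fintype (V1 t)] [∀ t, Fintype (V2 t)] in
theorem hist_resample (ht : t < T) (ω : ΩT X W V1 V2 T) (n : StepNoise W V1 V2 t) :
    hist S g (toPrim T (resample ht ω n)) t = hist S g (toPrim T ω) t := by
  rw [toPrim_resample]
  exact hist_congr S g rfl (fun s hs => Function.update_of_ne (by lia) _ _)
    (fun s hs => Function.update_of_ne (by lia) _ _)
    (fun s hs => Function.update_of_ne (by lia) _ _)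

omit [Fintype (X 0)] [∀ t, Fintype (W t)] [∀ t, Fintype (V1 t)] [∀ t, Fintype (V2 t)] in
theorem m1Traj_resample (ht : t < T) (ω : ΩT X W V1 V2 T) (n : StepNoise W V1 V2 t) :
    m1Traj S g (toPrim T (resample ht ω n)) t = m1Traj S g (toPrim T ω) t := by
  refine m1Traj_congr S g (hist_resample S g ht ω n) ?_ ?_ <;> rw [toPrim_resample] <;>
    exact fun s hs => Function.update_of_ne (by lia) _ _

omit [Fintype (X 0)] [∀ t, Fintype (W t)] [∀ t, Fintype (V1 t)] [∀ t, Fintype (V2 t)] in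
theorem stateObs_succ_resample (ht : t < T) (ω : ΩT X W V1 V2 T) (n : StepNoise W V1 V2 t) :
    stateObs S g (toPrim T (resample ht ω n)) (t + 1) =
      step S t (xTraj S g (toPrim T ω) t) (u1Traj S g (toPrim T ω) t)
        (u2Traj S g (toPrim T ω) t) n := by
  have hm := m1Traj_resample S g ht ω n
  rw [stateObs_succ, xTraj_congr S g (hist_resample S g ht ω n), u1Traj_congr S g hm,
    u2Traj_congr S g hm, toPrim_resample]
  simp only [Function.update_self]

/-- The transition law `P((X_{t+1}, Y¹_{t+1}, Y²_{t+1}) ∈ E | X_t = x, U¹_t = u1, U²_t = u2)`. -/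
def transitionProb (t : ℕ) (x : X t) (u1 : U1 t) (u2 : U2 t)
    (E : Set (X (t + 1) × Y1 (t + 1) × Y2 (t + 1))) : ℝ :=
  prob (stepMass P t) fun n => step S t x u1 u2 n ∈ E

/-- The law of `(X_{t+1}, Y¹_{t+1}, Y²_{t+1})` predicted from the law `π` of `X_t` and the
actions at time `t`. The sum is a `finsum` because information states have finite support even
if the state space is infinite. -/
def predict (t : ℕ) (π : X t → ℝ) (u1 : U1 t) (u2 : U2 t)
    (E : Set (X (t + 1) × Y1 (t + 1) × Y2 (t + 1))) : ℝ :=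
  ∑ᶠ x, π x * transitionProb S P t x u1 u2 E

/-- The filter `f̃¹_t`: the predicted law conditioned on the new observations by Bayes' rule. -/
def bayesFilter (t : ℕ) (π : X t → ℝ) (u1 : U1 t) (u2 : U2 t)
    (z : Y1 (t + 1) × U1 t × Y2 (t + 1) × U2 t) : X (t + 1) → ℝ := fun x =>
  predict S P t π u1 u2 {p | p.1 = x ∧ p.2 = (z.1, z.2.2.1)} /
    predict S P t π u1 u2 {p | p.2 = (z.1, z.2.2.1)}

theorem condProb_stateObs_succ_mem (ht : t < T) (ω : ΩT X W V1 V2 T)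
    (E : Set (X (t + 1) × Y1 (t + 1) × Y2 (t + 1))) :
    condProb (mass P T) (fun ω' => stateObs S g (toPrim T ω') (t + 1) ∈ E)
        (fun ω' => m1Traj S g (toPrim T ω') t = m1Traj S g (toPrim T ω) t) =
      predict S P t (infoState1 S g P T ω t) (u1Traj S g (toPrim T ω) t)
        (u2Traj S g (toPrim T ω) t) E := by
  have memory_invariant : ∀ ω' n,
      m1Traj S g (toPrim T (resample ht ω' n)) t = m1Traj S g (toPrim T ω) t ↔
        m1Traj S g (toPrim T ω') t = m1Traj S g (toPrim T ω) t :=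
    fun ω' n => by rw [m1Traj_resample]
  have transition : ∀ ω', m1Traj S g (toPrim T ω') t = m1Traj S g (toPrim T ω) t →
      (prob (stepMass P t) fun n => stateObs S g (toPrim T (resample ht ω' n)) (t + 1) ∈ E) =
        transitionProb S P t (xTraj S g (toPrim T ω') t) (u1Traj S g (toPrim T ω) t)
          (u2Traj S g (toPrim T ω) t) E := fun ω' hm => by
    simp only [stateObs_succ_resample, u1Traj_congr S g hm, u2Traj_congr S g hm, transitionProb]
  rw [(isResampling_mass P ht).condProb_eq_condExp memory_invariant, condExp_congr_left transition,
    condExp_comp_eq_finsum (mass P T) (fun ω' => xTraj S g (toPrim T ω') t)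
      (fun x => transitionProb S P t x _ _ E)]
  rfl

theorem infoState1_succ (ht : t < T) (ω : ΩT X W V1 V2 T) (hω : 0 < mass P T ω) :
    infoState1 S g P T ω (t + 1) =
      bayesFilter S P t (infoState1 S g P T ω t) (u1Traj S g (toPrim T ω) t)
        (u2Traj S g (toPrim T ω) t) (z1Traj S g (toPrim T ω) t) := by
  funext x
  have hm : 0 < prob (mass P T) fun ω' =>
      m1Traj S g (toPrim T ω') t = m1Traj S g (toPrim T ω) t := prob_pos (mass_nonneg P) rfl hω
  rw [infoState1, condProb_congr_right fun ω' => m1Traj_succ_eq_iff S g, condProb_and_right hm.ne',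
    bayesFilter, ← condProb_stateObs_succ_mem S g P ht, ← condProb_stateObs_succ_mem S g P ht]
  rfl

theorem infoState1_congr {ω ω' : ΩT X W V1 V2 T}
    (h : m1Traj S g (toPrim T ω) t = m1Traj S g (toPrim T ω') t) :
    infoState1 S g P T ω t = infoState1 S g P T ω' t := by
  simp only [funext_iff, infoState1, h, implies_true]

theorem condProb_infoState1_succ_mem (ht : t < T) (ω : ΩT X W V1 V2 T)
    (P1 : Set (X (t + 1) → ℝ)) :
    condProb (mass P T) (fun ω' => infoState1 S g P T ω' (t + 1) ∈ P1)
        (fun ω' => m1Traj S g (toPrim T ω') t = m1Traj S g (toPrim T ω) t) =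
      predict S P t (infoState1 S g P T ω t) (u1Traj S g (toPrim T ω) t)
        (u2Traj S g (toPrim T ω) t)
        {p | bayesFilter S P t (infoState1 S g P T ω t) (u1Traj S g (toPrim T ω) t)
          (u2Traj S g (toPrim T ω) t)
          (p.2.1, u1Traj S g (toPrim T ω) t, p.2.2, u2Traj S g (toPrim T ω) t) ∈ P1} := by
  rw [← condProb_stateObs_succ_mem S g P ht]
  refine condProb_congr_left fun ω' hω' hm => ?_
  rw [infoState1_succ S g P ht ω' ((mass_nonneg P ω').lt_of_ne' hω'), infoState1_congr S g P hm,
    z1Traj, u1Traj_congr S g hm, u2Traj_congr S g hm]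
  rfl

theorem condProb_infoState1_succ_mem_eq (ht : t < T) (ω : ΩT X W V1 V2 T) (hω : 0 < mass P T ω)
    (P1 : Set (X (t + 1) → ℝ)) :
    condProb (mass P T) (fun ω' => infoState1 S g P T ω' (t + 1) ∈ P1)
        (fun ω' => infoState1 S g P T ω' t = infoState1 S g P T ω t ∧
          u1Traj S g (toPrim T ω') t = u1Traj S g (toPrim T ω) t ∧
          u2Traj S g (toPrim T ω') t = u2Traj S g (toPrim T ω) t) =
      condProb (mass P T) (fun ω' => infoState1 S g P T ω' (t + 1) ∈ P1)
        (fun ω' => m1Traj S g (toPrim T ω') t = m1Traj S g (toPrim T ω) t) := by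
  refine condProb_eq_of_forall_fiber (M := fun ω' => m1Traj S g (toPrim T ω') t) (mass_nonneg P)
    (fun ω₁ ω₂ hm h => ?_) (prob_pos (mass_nonneg P) ⟨rfl, rfl, rfl⟩ hω).ne' fun ω' h _ => ?_
  · rwa [infoState1_congr S g P hm, u1Traj_congr S g hm, u2Traj_congr S g hm]
  · obtain ⟨hπ, hu1, hu2⟩ := h
    rw [condProb_infoState1_succ_mem S g P ht, condProb_infoState1_succ_mem S g P ht, hπ, hu1, hu2]

end Filter

theorem infoState1_filter_general (S : Sys X U1 U2 W V1 V2 Y1 Y2) (P : PrimPMF X W V1 V2) :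
    ∃ ftil : ∀ t, (X t → ℝ) → U1 t → U2 t →
        (Y1 (t + 1) × U1 t × Y2 (t + 1) × U2 t) → (X (t + 1) → ℝ),
      ∀ (T : ℕ) (g : Strat U1 U2 Y1 Y2), ∀ t, t < T →
        ∀ ω : ΩT X W V1 V2 T, 0 < mass P T ω →
          (infoState1 S g P T ω (t + 1) =
            ftil t (infoState1 S g P T ω t) (u1Traj S g (toPrim T ω) t)
              (u2Traj S g (toPrim T ω) t) (z1Traj S g (toPrim T ω) t)) ∧
          ∀ P1 : Set (X (t + 1) → ℝ),
            condProb (mass P T) (fun ω' => infoState1 S g P T ω' (t + 1) ∈ P1)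
              (fun ω' => m1Traj S g (toPrim T ω') t = m1Traj S g (toPrim T ω) t ∧
                u2Traj S g (toPrim T ω') t = u2Traj S g (toPrim T ω) t) =
            condProb (mass P T) (fun ω' => infoState1 S g P T ω' (t + 1) ∈ P1)
              (fun ω' => infoState1 S g P T ω' t = infoState1 S g P T ω t ∧
                u1Traj S g (toPrim T ω') t = u1Traj S g (toPrim T ω) t ∧
                u2Traj S g (toPrim T ω') t = u2Traj S g (toPrim T ω) t) := by
  refine ⟨bayesFilter S P, fun T g t ht ω hω => ⟨infoState1_succ S g P ht ω hω, fun P1 => ?_⟩⟩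
  rw [condProb_infoState1_succ_mem_eq S g P ht ω hω]
  exact condProb_congr_right fun ω' => and_iff_left_of_imp (u2Traj_congr S g)

/-- Lemma 6 of the paper. There is a strategy-independent filter
`f̃¹_t` with `Π¹_{t+1} = f̃¹_t (Π¹_t, U¹_t, U²_t, Z¹_{t+1})` along every realization
of positive probability; consequently, for every (Borel) set `P¹` of distributions,
`P(Π¹_{t+1} ∈ P¹ | M¹_t, U²_t) = P(Π¹_{t+1} ∈ P¹ | Π¹_t, U¹_t, U²_t)`. -/
theorem infoState1_filter
    [∀ t, Fintype (X t)] [∀ t, Fintype (U1 t)] [∀ t, Fintype (U2 t)]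
    [∀ t, Fintype (Y1 t)] [∀ t, Fintype (Y2 t)]
    (T : ℕ) (S : Sys X U1 U2 W V1 V2 Y1 Y2) (P : PrimPMF X W V1 V2) :
    ∃ ftil : ∀ t, (X t → ℝ) → U1 t → U2 t →
        (Y1 (t + 1) × U1 t × Y2 (t + 1) × U2 t) → (X (t + 1) → ℝ),
      ∀ (g : Strat U1 U2 Y1 Y2) (ψ : ∀ t, M2 Y2 U2 t → (X t → ℝ) → U1 t),
        Compat S g ψ P T →
        ∀ t, t < T → ∀ ω : ΩT X W V1 V2 T, 0 < mass P T ω →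
          (infoState1 S g P T ω (t + 1) =
            ftil t (infoState1 S g P T ω t) (u1Traj S g (toPrim T ω) t)
              (u2Traj S g (toPrim T ω) t) (z1Traj S g (toPrim T ω) t)) ∧
          ∀ P1 : Set (X (t + 1) → ℝ),
            condProb (mass P T) (fun ω' => infoState1 S g P T ω' (t + 1) ∈ P1)
              (fun ω' => m1Traj S g (toPrim T ω') t = m1Traj S g (toPrim T ω) t ∧
                u2Traj S g (toPrim T ω') t = u2Traj S g (toPrim T ω) t) =
            condProb (mass P T) (fun ω' => infoState1 S g P T ω' (t + 1) ∈ P1)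
              (fun ω' => infoState1 S g P T ω' t = infoState1 S g P T ω t ∧
                u1Traj S g (toPrim T ω') t = u1Traj S g (toPrim T ω) t ∧
                u2Traj S g (toPrim T ω') t = u2Traj S g (toPrim T ω) t) :=
  (infoState1_filter_general S P).imp fun _ h g _ _ => h T g

end

end NestedTeam
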